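/- For every n ≥ 2 and m ≥ 1, the m+1-st Taylor coefficient of V_n at 0 beyond degree 1 is A_{m+1}^{(n)} = -(1/(n+1))·Σ_{k=1}^{n} cos^{2m}(kπ/(n+1))·sin²(kπ/(n+1)); in particular A_m^{(n)} < 0 for all m ≥ 2 with the sum nonzero, and specifically A_m^{(n)} < 0 for all m > n. -/

import Mathlib

noncomputable def V (x : ℝ) : ℕ → ℝ
  | 0 => 1
  | n + 1 => (1 - x + V x n) / (1 + V x n)

/-!
In the coordinate `x = 4r / (1 + r)²` the recursion is solved by
`V x n = (1 - r) / (1 + r) * ((1 + r ^ (n + 1)) / (1 - r ^ (n + 1)))`. The last factor is the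
average of the Poisson kernel of `r` over the `(n + 1)`-st roots of unity, and in terms of `x` this
says that `V x n` is the average of `(1 - x) / (1 - cos² θ * x)` over `θ = kπ / (n + 1)`,
`0 ≤ k ≤ n`. Expanding each of these fractions in powers of `x` gives the coefficients.
-/

open Filter Finset Topology

lemma inv_one_sub_eq_geom_sum_div {K : Type*} [DivisionRing K] {z : K} {N : ℕ} (hz : z ^ N ≠ 1) :
    (1 - z)⁻¹ = (∑ j ∈ range N, z ^ j) / (1 - z ^ N) := by
  have hz' : 1 - z ≠ 0 := fun h ↦ hz (by rw [← sub_eq_zero.1 h, one_pow])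
  rw [eq_div_iff (sub_ne_zero.2 hz.symm), ← mul_neg_geom_sum, inv_mul_cancel_left₀ hz']

section RootsOfUnity

variable {K : Type*} [Field K] {ζ r : K} {N : ℕ}

lemma sum_inv_one_sub_mul_pow (hζ : IsPrimitiveRoot ζ N) (hr : r ^ N ≠ 1) :
    ∑ k ∈ range N, (1 - r * ζ ^ k)⁻¹ = N / (1 - r ^ N) := by
  have hN : 0 < N := Nat.pos_of_ne_zero fun h ↦ hr (by rw [h, pow_zero])
  have hpow (k : ℕ) : (r * ζ ^ k) ^ N = r ^ N := by
    rw [mul_pow, pow_right_comm, hζ.pow_eq_one, one_pow, mul_one]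
  have hexpand (k : ℕ) :
      (1 - r * ζ ^ k)⁻¹ = (∑ j ∈ range N, r ^ j * (ζ ^ j) ^ k) / (1 - r ^ N) := by
    rw [inv_one_sub_eq_geom_sum_div (by rwa [hpow]), hpow]
    simp only [mul_pow, pow_right_comm ζ k]
  have horth (j : ℕ) (hj : j ∈ range N) (hj₀ : j ≠ 0) :
      ∑ k ∈ range N, r ^ j * (ζ ^ j) ^ k = 0 := by
    have hj₁ : ζ ^ j ≠ 1 := hζ.pow_ne_one_of_pos_of_lt hj₀ (mem_range.1 hj)
    rw [← mul_sum, geom_sum_eq hj₁, pow_right_comm, hζ.pow_eq_one, one_pow, sub_self, zero_div,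
      mul_zero]
  simp only [hexpand]
  rw [← sum_div, sum_comm, sum_eq_single_of_mem 0 (mem_range.2 hN) horth]
  simp

lemma sum_one_sub_sq_div_mul (hζ : IsPrimitiveRoot ζ N) (hr : r ^ N ≠ 1) :
    ∑ k ∈ range N, (1 - r ^ 2) / ((1 - r * ζ ^ k) * (1 - r * ζ⁻¹ ^ k)) =
      N * ((1 + r ^ N) / (1 - r ^ N)) := by
  have hne {ξ : K} (hξ : IsPrimitiveRoot ξ N) (k : ℕ) : 1 - r * ξ ^ k ≠ 0 := fun h ↦ hr <| by
    rw [← one_pow N, sub_eq_zero.1 h, mul_pow, pow_right_comm, hξ.pow_eq_one, one_pow, mul_one]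
  have hsplit (k : ℕ) : (1 - r ^ 2) / ((1 - r * ζ ^ k) * (1 - r * ζ⁻¹ ^ k)) =
      (1 - r * ζ ^ k)⁻¹ + (1 - r * ζ⁻¹ ^ k)⁻¹ - 1 := by
    have hinv : ζ ^ k * ζ⁻¹ ^ k = 1 := by
      have hN : N ≠ 0 := fun h ↦ hr (by rw [h, pow_zero])
      rw [← mul_pow, mul_inv_cancel₀ (hζ.ne_zero hN), one_pow]
    have hζk := hne hζ k
    have hζk' := hne hζ.inv k
    generalize ζ⁻¹ ^ k = η at *
    field_simp
    linear_combination r ^ 2 * hinv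
  have hr' : 1 - r ^ N ≠ 0 := sub_ne_zero.2 hr.symm
  simp only [hsplit]
  rw [sum_sub_distrib, sum_add_distrib, sum_inv_one_sub_mul_pow hζ hr,
    sum_inv_one_sub_mul_pow hζ.inv hr, sum_const, card_range, nsmul_one]
  field_simp
  ring

end RootsOfUnity

lemma one_sub_mul_exp_mul_one_sub_mul_exp_neg (r φ : ℂ) :
    (1 - r * Complex.exp (φ * Complex.I)) * (1 - r * Complex.exp (-φ * Complex.I)) =
      1 - 2 * r * Complex.cos φ + r ^ 2 := by
  have hinv : Complex.exp (φ * Complex.I) * Complex.exp (-φ * Complex.I) = 1 := by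
    rw [← Complex.exp_add, neg_mul, add_neg_cancel, Complex.exp_zero]
  rw [Complex.cos]
  linear_combination r ^ 2 * hinv

lemma sum_poissonKernel_rootsOfUnity {r : ℝ} {N : ℕ} (hr : r ^ N ≠ 1) :
    ∑ k ∈ range N, (1 - r ^ 2) / (1 - 2 * r * Real.cos (2 * (k * Real.pi / N)) + r ^ 2) =
      N * ((1 + r ^ N) / (1 - r ^ N)) := by
  have hN : N ≠ 0 := fun h ↦ hr (by rw [h, pow_zero])
  have hdenom (k : ℕ) :
      ((1 - 2 * r * Real.cos (2 * (k * Real.pi / N)) + r ^ 2 : ℝ) : ℂ) =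
        (1 - r * Complex.exp (2 * Real.pi * Complex.I / N) ^ k) *
          (1 - r * (Complex.exp (2 * Real.pi * Complex.I / N))⁻¹ ^ k) := by
    push_cast
    rw [← one_sub_mul_exp_mul_one_sub_mul_exp_neg, ← Complex.exp_neg, ← Complex.exp_nat_mul,
      ← Complex.exp_nat_mul]
    ring_nf
  have hsum := sum_one_sub_sq_div_mul (Complex.isPrimitiveRoot_exp N hN)
    (r := (r : ℂ)) (by exact_mod_cast hr)
  simp only [← hdenom] at hsum
  exact_mod_cast hsum

lemma pow_ne_one_of_abs_lt_one {R : Type*} [Ring R] [LinearOrder R] [IsStrictOrderedRing R]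
    {r : R} (hr : |r| < 1) {N : ℕ} (hN : N ≠ 0) : r ^ N ≠ 1 :=
  fun h ↦ hr.ne ((abs_pow_eq_one r hN).1 (by rw [h, abs_one]))

lemma exists_four_mul_div_one_add_sq_eq {x : ℝ} (hx : x < 1) :
    ∃ r : ℝ, |r| < 1 ∧ 4 * r / (1 + r) ^ 2 = x := by
  have hs : 0 < √(1 - x) := Real.sqrt_pos.2 (sub_pos.2 hx)
  have hsq : √(1 - x) ^ 2 = 1 - x := Real.sq_sqrt (sub_pos.2 hx).le
  refine ⟨(1 - √(1 - x)) / (1 + √(1 - x)), ?_, ?_⟩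
  · rw [abs_div, abs_of_pos (by positivity : 0 < 1 + √(1 - x)), div_lt_one (by positivity), abs_lt]
    constructor <;> linarith
  · field_simp
    linear_combination -4 * hsq

lemma V_four_mul_div_one_add_sq {r : ℝ} (hr : |r| < 1) (n : ℕ) :
    V (4 * r / (1 + r) ^ 2) n =
      (1 - r) / (1 + r) * ((1 + r ^ (n + 1)) / (1 - r ^ (n + 1))) := by
  have hpos : 1 + r ≠ 0 := by linarith [(abs_lt.1 hr).1]
  have hpow (m : ℕ) : 1 - r ^ (m + 1) ≠ 0 :=
    sub_ne_zero.2 (pow_ne_one_of_abs_lt_one hr m.succ_ne_zero).symm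
  induction n with
  | zero =>
    have h0 := hpow 0
    rw [V]
    rw [zero_add, pow_one] at *
    field_simp
  | succ n ih =>
    have hn := hpow n
    have hn' := hpow (n + 1)
    have hden : 1 + (1 - r) / (1 + r) * ((1 + r ^ (n + 1)) / (1 - r ^ (n + 1))) =
        2 * (1 - r ^ (n + 2)) / ((1 + r) * (1 - r ^ (n + 1))) := by
      field_simp
      ring
    have hnum : 1 - 4 * r / (1 + r) ^ 2 +
        (1 - r) / (1 + r) * ((1 + r ^ (n + 1)) / (1 - r ^ (n + 1))) =
        2 * (1 - r) * (1 + r ^ (n + 2)) / ((1 + r) ^ 2 * (1 - r ^ (n + 1))) := by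
      field_simp
      ring
    rw [V, ih, hden, hnum]
    field_simp

lemma one_sub_div_one_sub_cos_sq_mul {r : ℝ} (hr : 1 + r ≠ 0) (θ : ℝ) :
    (1 - 4 * r / (1 + r) ^ 2) / (1 - Real.cos θ ^ 2 * (4 * r / (1 + r) ^ 2)) =
      (1 - r) / (1 + r) * ((1 - r ^ 2) / (1 - 2 * r * Real.cos (2 * θ) + r ^ 2)) := by
  have hnum : 1 - 4 * r / (1 + r) ^ 2 = (1 - r) ^ 2 / (1 + r) ^ 2 := by
    field_simp
    ring
  have hden : 1 - Real.cos θ ^ 2 * (4 * r / (1 + r) ^ 2) =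
      (1 - 2 * r * Real.cos (2 * θ) + r ^ 2) / (1 + r) ^ 2 := by
    rw [Real.cos_two_mul]
    field_simp
    ring
  rw [hnum, hden, div_div_div_cancel_right₀ (pow_ne_zero 2 hr), ← mul_div_assoc]
  congr 1
  field_simp
  ring

theorem V_eq_sum_div {x : ℝ} (hx : x < 1) (n : ℕ) :
    V x n =
      (∑ k ∈ range (n + 1), (1 - x) / (1 - Real.cos (k * Real.pi / (n + 1)) ^ 2 * x)) /
        (n + 1) := by
  obtain ⟨r, hr, rfl⟩ := exists_four_mul_div_one_add_sq_eq hx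
  have hpos : 1 + r ≠ 0 := by linarith [(abs_lt.1 hr).1]
  have hpoisson := sum_poissonKernel_rootsOfUnity (pow_ne_one_of_abs_lt_one hr n.succ_ne_zero)
  push_cast at hpoisson
  simp only [one_sub_div_one_sub_cos_sq_mul hpos]
  rw [V_four_mul_div_one_add_sq hr, ← mul_sum, hpoisson]
  field_simp

/-- The Taylor coefficients at `0` of the Möbius transformation `x ↦ (1 - x) / (1 - a * x)`. -/
def mobiusCoeff {R : Type*} [CommRing R] (a : R) : ℕ → R
  | 0 => 1
  | m + 1 => -((1 - a) * a ^ m)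

lemma hasSum_mobiusCoeff {𝕜 : Type*} [NormedField 𝕜] {a x : 𝕜} (h : ‖a * x‖ < 1) :
    HasSum (fun m ↦ mobiusCoeff a m * x ^ m) ((1 - x) / (1 - a * x)) := by
  have hne : 1 - a * x ≠ 0 := fun h0 ↦ by
    rw [← sub_eq_zero.1 h0, norm_one] at h
    exact h.false
  have hterm (m : ℕ) :
      mobiusCoeff a (m + 1) * x ^ (m + 1) = (a - 1) * x * (a * x) ^ m := by
    rw [mobiusCoeff]
    ring
  have hvalue : (1 - x) / (1 - a * x) - ∑ m ∈ range 1, mobiusCoeff a m * x ^ m =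
      (a - 1) * x * (1 - a * x)⁻¹ := by
    rw [sum_range_one, mobiusCoeff, pow_zero, mul_one, div_sub_one hne, ← div_eq_mul_inv]
    ring
  rw [← hasSum_nat_add_iff' 1, hvalue]
  simpa only [hterm] using (hasSum_geometric_of_norm_lt_one h).mul_left ((a - 1) * x)

theorem hasSum_V {x : ℝ} (hx : |x| < 1) (n : ℕ) :
    HasSum (fun m ↦
      (∑ k ∈ range (n + 1), mobiusCoeff (Real.cos (k * Real.pi / (n + 1)) ^ 2) m) / (n + 1) *
        x ^ m) (V x n) := by
  have hcos (θ : ℝ) : ‖Real.cos θ ^ 2 * x‖ < 1 := by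
    rw [norm_mul, Real.norm_of_nonneg (sq_nonneg _)]
    exact (mul_le_of_le_one_left (norm_nonneg x) (Real.cos_sq_le_one θ)).trans_lt hx
  rw [V_eq_sum_div (abs_lt.1 hx).2]
  simp only [div_mul_eq_mul_div, sum_mul]
  exact (hasSum_sum fun k _ ↦ hasSum_mobiusCoeff (hcos _)).div_const _

lemma sum_mobiusCoeff_cos_sq_succ (n m : ℕ) :
    ∑ k ∈ range (n + 1), mobiusCoeff (Real.cos (k * Real.pi / (n + 1)) ^ 2) (m + 1) =
      -∑ k ∈ Icc 1 n, Real.cos (k * Real.pi / (n + 1)) ^ (2 * m) *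
        Real.sin (k * Real.pi / (n + 1)) ^ 2 := by
  have hterm (θ : ℝ) :
      mobiusCoeff (Real.cos θ ^ 2) (m + 1) = -(Real.cos θ ^ (2 * m) * Real.sin θ ^ 2) := by
    rw [mobiusCoeff, ← Real.sin_sq, ← pow_mul, mul_comm]
  simp only [hterm]
  rw [sum_neg_distrib, range_eq_Ico, sum_eq_sum_Ico_succ_bot n.succ_pos, zero_add,
    Nat.succ_eq_add_one, Ico_add_one_right_eq_Icc]
  simp

lemma cos_pow_mul_sin_sq_nonneg (θ : ℝ) (m : ℕ) : 0 ≤ Real.cos θ ^ (2 * m) * Real.sin θ ^ 2 :=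
  mul_nonneg ((even_two_mul m).pow_nonneg _) (sq_nonneg _)

lemma cos_pi_div_pos {n : ℕ} (hn : 2 ≤ n) : 0 < Real.cos (Real.pi / (n + 1)) := by
  have hn' : (2 : ℝ) ≤ n := by exact_mod_cast hn
  refine Real.cos_pos_of_mem_Ioo ⟨?_, ?_⟩
  · linarith [Real.pi_pos, div_pos Real.pi_pos (by linarith : (0 : ℝ) < n + 1)]
  · exact div_lt_div_of_pos_left Real.pi_pos two_pos (by linarith)

lemma sum_cos_pow_mul_sin_sq_pos {n : ℕ} (hn : 2 ≤ n) (m : ℕ) :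
    0 < ∑ k ∈ Icc 1 n, Real.cos (k * Real.pi / (n + 1)) ^ (2 * m) *
      Real.sin (k * Real.pi / (n + 1)) ^ 2 := by
  have hsin : 0 < Real.sin (Real.pi / (n + 1)) := by
    refine Real.sin_pos_of_pos_of_lt_pi (by positivity) (div_lt_self Real.pi_pos ?_)
    exact_mod_cast (by omega : 1 < n + 1)
  refine sum_pos' (fun _ _ ↦ cos_pow_mul_sin_sq_nonneg _ m)
    ⟨1, mem_Icc.2 ⟨le_rfl, by omega⟩, ?_⟩
  rw [Nat.cast_one, one_mul]
  exact mul_pos (pow_pos (cos_pi_div_pos hn) _) (pow_pos hsin 2)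

theorem eq_of_eventually_hasSum_mul_pow {𝕜 : Type*} [NontriviallyNormedField 𝕜] {a b : ℕ → 𝕜}
    {f : 𝕜 → 𝕜} (ha : ∀ᶠ x in 𝓝 0, HasSum (fun m ↦ a m * x ^ m) (f x))
    (hb : ∀ᶠ x in 𝓝 0, HasSum (fun m ↦ b m * x ^ m) (f x)) : a = b := by
  have hseries {c : ℕ → 𝕜} (hc : ∀ᶠ x in 𝓝 0, HasSum (fun m ↦ c m * x ^ m) (f x)) :
      HasFPowerSeriesAt f (FormalMultilinearSeries.ofScalars 𝕜 c) 0 := by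
    simpa [hasFPowerSeriesAt_iff, FormalMultilinearSeries.coeff_ofScalars, mul_comm] using hc
  exact FormalMultilinearSeries.ofScalars_series_injective 𝕜 𝕜
    ((hseries ha).eq_formalMultilinearSeries (hseries hb))

lemma eventually_nhds_zero_of_forall_norm_lt {E : Type*} [SeminormedAddCommGroup E] {ρ : ℝ}
    (hρ : 0 < ρ) {p : E → Prop} (h : ∀ x, ‖x‖ < ρ → p x) : ∀ᶠ x in 𝓝 0, p x := by
  filter_upwards [Metric.ball_mem_nhds (0 : E) hρ] with x hx
  exact h x (mem_ball_zero_iff.1 hx)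

theorem stmt16_general (n : ℕ) (A : ℕ → ℝ)
    (hA : ∀ᶠ x in 𝓝 0, HasSum (fun m ↦ A m * x ^ m) (V x n)) :
    (∀ m : ℕ,
      A (m + 1) = -(1 / (n + 1)) *
        ∑ k ∈ Icc 1 n,
          Real.cos (k * Real.pi / (n + 1)) ^ (2 * m) *
            Real.sin (k * Real.pi / (n + 1)) ^ 2) ∧
    (∀ m : ℕ,
      (∑ k ∈ Icc 1 n,
        Real.cos (k * Real.pi / (n + 1)) ^ (2 * m) *
          Real.sin (k * Real.pi / (n + 1)) ^ 2) ≠ 0 → A (m + 1) < 0) ∧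
    (2 ≤ n → ∀ m : ℕ, A (m + 1) < 0) := by
  have hcoeff (m : ℕ) : A (m + 1) = -(1 / (n + 1)) *
      ∑ k ∈ Icc 1 n, Real.cos (k * Real.pi / (n + 1)) ^ (2 * m) *
        Real.sin (k * Real.pi / (n + 1)) ^ 2 := by
    have hV := eventually_nhds_zero_of_forall_norm_lt one_pos
      fun x (hx : |x| < 1) ↦ hasSum_V hx n
    rw [congrFun (eq_of_eventually_hasSum_mul_pow hA hV) (m + 1), sum_mobiusCoeff_cos_sq_succ]
    ring
  have hneg (m : ℕ) (hm : (∑ k ∈ Icc 1 n, Real.cos (k * Real.pi / (n + 1)) ^ (2 * m) *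
      Real.sin (k * Real.pi / (n + 1)) ^ 2) ≠ 0) : A (m + 1) < 0 := by
    rw [hcoeff]
    exact mul_neg_of_neg_of_pos (neg_neg_of_pos (by positivity))
      ((sum_nonneg fun _ _ ↦ cos_pow_mul_sin_sq_nonneg _ m).lt_of_ne' hm)
  exact ⟨hcoeff, hneg, fun hn m ↦ hneg m (sum_cos_pow_mul_sin_sq_pos hn m).ne'⟩

theorem stmt16 (n : ℕ) (hn : 2 ≤ n) (A : ℕ → ℝ)
    (hA : ∀ x : ℝ, |x| < ((Real.cos (Real.pi / (n + 1)))⁻¹) ^ 2 →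
      HasSum (fun m => A m * x ^ m) (V x n)) :
    (∀ m : ℕ, 1 ≤ m →
      A (m + 1) = -(1 / (n + 1)) *
        ∑ k ∈ Finset.Icc 1 n,
          Real.cos (k * Real.pi / (n + 1)) ^ (2 * m) *
            Real.sin (k * Real.pi / (n + 1)) ^ 2) ∧
    (∀ m : ℕ, 2 ≤ m →
      (∑ k ∈ Finset.Icc 1 n,
        Real.cos (k * Real.pi / (n + 1)) ^ (2 * (m - 1)) *
          Real.sin (k * Real.pi / (n + 1)) ^ 2) ≠ 0 → A m < 0) ∧
    (∀ m : ℕ, n < m → A m < 0) := by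
  obtain ⟨hcoeff, hneg, hneg'⟩ := stmt16_general n A <| eventually_nhds_zero_of_forall_norm_lt
    (pow_pos (inv_pos.2 (cos_pi_div_pos hn)) 2) hA
  exact ⟨fun m _ ↦ hcoeff m, fun | m + 1, _ => hneg m, fun | m + 1, _ => hneg' hn m⟩
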